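/- Let G be a finite set of labeled polynomials containing f_i^[e_i] for every i = 1,...,m. If for every critical pair of two elements of G the corresponding S-polynomial has a standard representation w.r.t. G, then G is a labeled Gröbner basis of (f_1,...,f_m). -/

import Mathlib

open MvPolynomial

noncomputable section

variable {k : Type*} [Field k] {m n : ℕ}

/-- The leading power product of a polynomial, w.r.t. the monomial order `L1`;
`⊥` for the zero polynomial. -/
def lpp (L1 : LinearOrder (Fin n →₀ ℕ)) (f : MvPolynomial (Fin n) k) :
    WithBot (Fin n →₀ ℕ) :=
  @Finset.max _ L1 f.support

/-- The leading coefficient of a polynomial w.r.t. the monomial order `L1`. -/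
def plc (L1 : LinearOrder (Fin n →₀ ℕ)) (f : MvPolynomial (Fin n) k) : k :=
  WithBot.recBotCoe 0 (fun α => MvPolynomial.coeff α f) (lpp L1 f)

/-- The support of a module element `u ∈ R^m`, as a set of module monomials `(i, α)`. -/
def msupport (u : Fin m → MvPolynomial (Fin n) k) : Finset (Fin m × (Fin n →₀ ℕ)) :=
  Finset.univ.biUnion fun i => (u i).support.image fun α => (i, α)

/-- The signature of a module element, w.r.t. the module term order `L2`;
`⊥` for the zero element. -/
def sig (L2 : LinearOrder (Fin m × (Fin n →₀ ℕ))) (u : Fin m → MvPolynomial (Fin n) k) :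
    WithBot (Fin m × (Fin n →₀ ℕ)) :=
  @Finset.max _ L2 (msupport u)

/-- The leading coefficient of a module element (the coefficient at its signature). -/
def mlc (L2 : LinearOrder (Fin m × (Fin n →₀ ℕ))) (u : Fin m → MvPolynomial (Fin n) k) : k :=
  WithBot.recBotCoe 0 (fun p => MvPolynomial.coeff p.2 (u p.1)) (sig L2 u)

/-- The strict order on `WithBot β` induced by a linear order `L` on `β`
(`⊥` smaller than everything). -/
def bslt {β : Type*} (L : LinearOrder β) (a b : WithBot β) : Prop :=
  WithBot.recBotCoe False (fun y => WithBot.recBotCoe True (fun x => L.lt x y) a) b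

/-- The order on `WithBot β` induced by a linear order `L` on `β`. -/
def bsle {β : Type*} (L : LinearOrder β) (a b : WithBot β) : Prop :=
  WithBot.recBotCoe (a = ⊥) (fun y => WithBot.recBotCoe True (fun x => L.le x y) a) b

/-- Multiplication of a module element by the monomial `x^t`. -/
def tsmul (t : Fin n →₀ ℕ) (u : Fin m → MvPolynomial (Fin n) k) :
    Fin m → MvPolynomial (Fin n) k :=
  fun i => monomial t (1 : k) * u i

/-- `u ⬝ f⃗ = u₁ f₁ + ⋯ + u_m f_m`. -/
def dotf (fvec u : Fin m → MvPolynomial (Fin n) k) : MvPolynomial (Fin n) k :=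
  ∑ i, u i * fvec i

/-- The least common multiple of two monomials (componentwise max of exponents). -/
def mlcm (α β : Fin n →₀ ℕ) : Fin n →₀ ℕ :=
  Finsupp.zipWith max (max_self 0) α β

/-- `G` is a labeled Gröbner basis of `(f₁, …, f_m)`. -/
def IsLabeledGB (L1 : LinearOrder (Fin n →₀ ℕ)) (L2 : LinearOrder (Fin m × (Fin n →₀ ℕ)))
    (fvec : Fin m → MvPolynomial (Fin n) k)
    (G : Set (MvPolynomial (Fin n) k × (Fin m → MvPolynomial (Fin n) k))) : Prop :=
  ∀ (f : MvPolynomial (Fin n) k) (u : Fin m → MvPolynomial (Fin n) k),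
    f = dotf fvec u → f ≠ 0 →
      ∃ gv ∈ G, gv.1 ≠ 0 ∧ ∃ t : Fin n →₀ ℕ,
        WithBot.map (fun β => t + β) (lpp L1 gv.1) = lpp L1 f ∧
        bsle L2 (sig L2 (tsmul t gv.2)) (sig L2 u)

/-- `f^[u]` has a standard representation w.r.t. the set `B` of labeled polynomials. -/
def HasStdRep (L1 : LinearOrder (Fin n →₀ ℕ)) (L2 : LinearOrder (Fin m × (Fin n →₀ ℕ)))
    (B : Set (MvPolynomial (Fin n) k × (Fin m → MvPolynomial (Fin n) k)))
    (f : MvPolynomial (Fin n) k) (u : Fin m → MvPolynomial (Fin n) k) : Prop :=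
  ∃ (N : ℕ) (p : Fin N → MvPolynomial (Fin n) k)
      (g : Fin N → MvPolynomial (Fin n) k × (Fin m → MvPolynomial (Fin n) k)),
    (∀ i, g i ∈ B) ∧ f = ∑ i, p i * (g i).1 ∧
    (∀ i, bsle L1 (lpp L1 (p i * (g i).1)) (lpp L1 f)) ∧
    (∀ i, bsle L2 (sig L2 (fun j => p i * (g i).2 j)) (sig L2 u))

/-- The polynomial part of the S-polynomial of the critical pair `(x^tg, gv, x^th, hw)`. -/
def spolyP (L1 : LinearOrder (Fin n →₀ ℕ))
    (gv hw : MvPolynomial (Fin n) k × (Fin m → MvPolynomial (Fin n) k))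
    (tg th : Fin n →₀ ℕ) : MvPolynomial (Fin n) k :=
  monomial tg (1 : k) * gv.1 - C (plc L1 gv.1 / plc L1 hw.1) * (monomial th (1 : k) * hw.1)

/-- The module part of the S-polynomial of the critical pair `(x^tg, gv, x^th, hw)`. -/
def spolyV (L1 : LinearOrder (Fin n →₀ ℕ))
    (gv hw : MvPolynomial (Fin n) k × (Fin m → MvPolynomial (Fin n) k))
    (tg th : Fin n →₀ ℕ) : Fin m → MvPolynomial (Fin n) k :=
  fun j =>
    monomial tg (1 : k) * gv.2 j - C (plc L1 gv.1 / plc L1 hw.1) * (monomial th (1 : k) * hw.2 j)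

/-- `f^[u]` is reducible (in one step, by a one-side-reduction) by the set `G`
of labeled polynomials. -/
def Reducible (L1 : LinearOrder (Fin n →₀ ℕ)) (L2 : LinearOrder (Fin m × (Fin n →₀ ℕ)))
    (G : Set (MvPolynomial (Fin n) k × (Fin m → MvPolynomial (Fin n) k)))
    (f : MvPolynomial (Fin n) k) (u : Fin m → MvPolynomial (Fin n) k) : Prop :=
  f ≠ 0 ∧ ∃ hw ∈ G, hw.1 ≠ 0 ∧ ∃ t : Fin n →₀ ℕ,
    WithBot.map (fun β => t + β) (lpp L1 hw.1) = lpp L1 f ∧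
    bslt L2 (sig L2 (tsmul t hw.2)) (sig L2 u)

/-- `x^t ⬝ fu` is generalized rewritable by the finite set `B` (w.r.t. the strict partial
order `r` on labeled polynomials). -/
def GenRewritable (L2 : LinearOrder (Fin m × (Fin n →₀ ℕ)))
    (B : Finset (MvPolynomial (Fin n) k × (Fin m → MvPolynomial (Fin n) k)))
    (r : (MvPolynomial (Fin n) k × (Fin m → MvPolynomial (Fin n) k)) →
         (MvPolynomial (Fin n) k × (Fin m → MvPolynomial (Fin n) k)) → Prop)
    (t : Fin n →₀ ℕ)
    (fu : MvPolynomial (Fin n) k × (Fin m → MvPolynomial (Fin n) k)) : Prop :=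
  ∃ gv ∈ B, gv.2 ≠ 0 ∧
    (∃ pq qq : Fin m × (Fin n →₀ ℕ), sig L2 gv.2 = ↑pq ∧ sig L2 fu.2 = ↑qq ∧
      pq.1 = qq.1 ∧ ∃ γ : Fin n →₀ ℕ, pq.2 + γ = t + qq.2) ∧
    r gv fu

/-- The position-over-term module order: `(i, α) ≺ (j, β)` iff `i > j`,
or `i = j` and `α ≺₁ β`. -/
def potLT (L1 : LinearOrder (Fin n →₀ ℕ)) (p q : Fin m × (Fin n →₀ ℕ)) : Prop :=
  q.1 < p.1 ∨ (p.1 = q.1 ∧ L1.lt p.2 q.2)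

/-- `p` is the signature of the module element `w` w.r.t. the linear order `lt`
on module monomials. -/
def IsSigWrt (lt : (Fin m × (Fin n →₀ ℕ)) → (Fin m × (Fin n →₀ ℕ)) → Prop)
    (w : Fin m → MvPolynomial (Fin n) k) (p : Fin m × (Fin n →₀ ℕ)) : Prop :=
  p ∈ msupport w ∧ ∀ q ∈ msupport w, q ≠ p → lt q p

end

/-!
Fix `f = u · f⃗` and let `E` be the set of all `x^t g` with `g^[v] ∈ G` and `s(x^t v) ⪯ s(u)`.
Since `≺₂` restricts to a compatible order on each component of `R^m`, every monomial `x^t` of a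
polynomial `p` satisfies `s(x^t v) ⪯ s(p v)`; as `fᵢ^[eᵢ] ∈ G`, this puts `f` in the linear span
of `E`. If two elements of `E` have the same leading monomial, then up to a scalar they differ by
a monomial multiple of an S-polynomial, and the standard representation of the latter makes the
difference a combination of elements of `E` with smaller leading monomials. By well-founded
induction, `E` has the same span as a subset containing just one element for each leading monomial
of `E`. In a combination of such elements the leading terms cannot cancel, so the leading monomial
of `f` is that of an element of `E`.
-/

section Nonarchimedean

lemma deg_add_eq_max_of_ne {V Γ : Type*} [AddCommGroup V] [LinearOrder Γ] {deg : V → Γ}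
    (hadd : IsNonarchimedean deg) (hneg : ∀ x, deg (-x) ≤ deg x) {x y : V}
    (hne : deg x ≠ deg y) : deg (x + y) = max (deg x) (deg y) := by
  wlog hlt : deg x < deg y generalizing x y
  · rw [add_comm, max_comm]
    exact this hne.symm (hne.lt_or_gt.resolve_left hlt)
  rw [max_eq_right hlt.le]
  refine le_antisymm ((hadd x y).trans (max_le hlt.le le_rfl)) ?_
  have hy : deg y ≤ max (deg (x + y)) (deg (-x)) := by simpa using hadd (x + y) (-x)
  exact (le_max_iff.1 hy).resolve_right fun h => (h.trans (hneg x)).not_gt hlt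

lemma span_le_span_of_forall_sub_smul_mem {k V Γ : Type*} [Ring k] [AddCommGroup V] [Module k V]
    [Preorder Γ] [WellFoundedLT Γ] {deg : V → Γ} {B E : Set V}
    (hBE : ∀ x ∈ E, ∃ b ∈ B, ∃ c : k, x - c • b ∈ Submodule.span k {e ∈ E | deg e < deg x}) :
    Submodule.span k E ≤ Submodule.span k B := by
  rw [Submodule.span_le]
  intro x hx
  induction h : deg x using WellFoundedLT.induction generalizing x with
  | ind d ih =>
    subst h
    obtain ⟨b, hb, c, hc⟩ := hBE x hx
    have hle : Submodule.span k {e ∈ E | deg e < deg x} ≤ Submodule.span k B :=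
      Submodule.span_le.2 fun e he => ih _ he.2 he.1 rfl
    simpa using add_mem (hle hc) (Submodule.smul_mem _ c (Submodule.subset_span hb))

variable {k V Γ : Type*} [DivisionRing k] [AddCommGroup V] [Module k V] [LinearOrder Γ]
  {deg : V → Γ}

lemma sub_inv_smul_mem {W : Submodule k V} {x y : V} {c : k} (hc : c ≠ 0) (h : x - c • y ∈ W) :
    y - c⁻¹ • x ∈ W := by
  simpa [smul_sub, smul_smul, hc, sub_eq_add_neg, add_comm] using W.smul_mem (-c⁻¹) h

lemma exists_deg_sum_eq_of_injOn (hadd : IsNonarchimedean deg)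
    (hsmul : ∀ (c : k) x, deg (c • x) ≤ deg x) {s : Finset V} (hs : s.Nonempty)
    (hinj : Set.InjOn deg s) {c : V → k} (hc : ∀ x ∈ s, c x ≠ 0) :
    ∃ x ∈ s, deg (∑ y ∈ s, c y • y) = deg x := by
  have hneg (x : V) : deg (-x) ≤ deg x := by simpa using hsmul (-1) x
  have hdeg {x : V} (hx : c x ≠ 0) : deg (c x • x) = deg x :=
    (hsmul _ _).antisymm (by simpa [smul_smul, hx] using hsmul (c x)⁻¹ (c x • x))
  induction hs using Finset.Nonempty.cons_induction with
  | singleton x => exact ⟨x, by simp, by simpa using hdeg (hc x (by simp))⟩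
  | cons x s hx _ ih =>
    obtain ⟨y, hy, hsum⟩ := ih (hinj.mono (by simp)) fun z hz => hc z (by simp [hz])
    have hxy : deg (c x • x) ≠ deg (∑ z ∈ s, c z • z) := by
      rw [hdeg (hc x (by simp)), hsum]
      exact fun h => hx (hinj (by simp) (by simp [hy]) h ▸ hy)
    rw [Finset.sum_cons, deg_add_eq_max_of_ne hadd hneg hxy, hdeg (hc x (by simp)), hsum]
    rcases max_choice (deg x) (deg y) with h | h
    · exact ⟨x, by simp, h⟩
    · exact ⟨y, by simp [hy], h⟩

theorem exists_deg_eq_of_mem_span [WellFoundedLT Γ] (hadd : IsNonarchimedean deg)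
    (hsmul : ∀ (c : k) x, deg (c • x) ≤ deg x) {E : Set V}
    (hE : ∀ x ∈ E, ∀ y ∈ E, deg x = deg y →
      ∃ c : k, x - c • y ∈ Submodule.span k {e ∈ E | deg e < deg x})
    {f : V} (hf : f ∈ Submodule.span k E) (hf0 : f ≠ 0) : ∃ e ∈ E, deg e = deg f := by
  -- `B` picks one element of `E` for each degree attained on `E`.
  obtain ⟨B, hBE, hB⟩ := (Set.surjOn_image deg E).exists_bijOn_subset
  have hspan : Submodule.span k E ≤ Submodule.span k B :=
    span_le_span_of_forall_sub_smul_mem fun x hx => by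
      obtain ⟨b, hb, hbx⟩ := hB.surjOn (Set.mem_image_of_mem deg hx)
      exact ⟨b, hb, hE x hx b (hBE hb) hbx.symm⟩
  obtain ⟨c, hcB, rfl⟩ := Submodule.mem_span_set.1 (hspan hf)
  have hc : c.support.Nonempty := by
    rw [Finsupp.support_nonempty_iff]
    rintro rfl
    simp at hf0
  obtain ⟨e, he, hdeg⟩ := exists_deg_sum_eq_of_injOn hadd hsmul hc (hB.injOn.mono hcB)
    fun x hx => Finsupp.mem_support_iff.1 hx
  exact ⟨e, hBE (hcB he), hdeg.symm⟩

end Nonarchimedean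

section WithBotOrder

variable {β : Type*} {L : LinearOrder β} {a b c : WithBot β} {S : Finset β} {x : β}

lemma bsle_iff_le [L : LinearOrder β] : bsle L a b ↔ a ≤ b := by
  induction a <;> induction b <;> simp [bsle]

lemma bslt_iff_lt [L : LinearOrder β] : bslt L a b ↔ a < b := by
  induction a <;> induction b <;> simp [bslt]

lemma bsle_trans (hab : bsle L a b) (hbc : bsle L b c) : bsle L a c := by
  rw [bsle_iff_le] at *
  exact hab.trans hbc

lemma bsle_total (a b : WithBot β) : bsle L a b ∨ bsle L b a := by
  simp only [bsle_iff_le, le_total]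

lemma bslt_of_bsle_of_bslt (hab : bsle L a b) (hbc : bslt L b c) : bslt L a c := by
  rw [bsle_iff_le] at hab
  rw [bslt_iff_lt] at *
  exact hab.trans_lt hbc

lemma max_bsle_iff : bsle L (@Finset.max _ L S) b ↔ ∀ y ∈ S, bsle L y b := by
  simp only [bsle_iff_le, Finset.max_le_iff]

lemma coe_bsle_max_iff : bsle L x (@Finset.max _ L S) ↔ ∃ y ∈ S, L.le x y := by
  simp [bsle_iff_le, Finset.max_eq_sup_withBot, Finset.le_sup_iff (WithBot.bot_lt_coe x)]

lemma max_bslt_coe_iff : bslt L (@Finset.max _ L S) x ↔ ∀ y ∈ S, L.lt y x := by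
  simp [bslt_iff_lt, Finset.max_eq_sup_withBot, Finset.sup_lt_iff (WithBot.bot_lt_coe x)]

lemma max_map_of_strictMono {φ : β ↪ β} (hφ : ∀ x y, L.lt x y → L.lt (φ x) (φ y)) :
    @Finset.max _ L (S.map φ) = WithBot.map φ (@Finset.max _ L S) := by
  have hmono : Monotone (WithBot.map φ) :=
    (StrictMono.withBot_map (f := φ) fun x y => hφ x y).monotone
  simp only [Finset.max_eq_sup_withBot, Finset.sup_map]
  exact (Finset.apply_sup_eq_sup_comp (f := WithBot.some) (WithBot.map φ)
    (fun _ _ => hmono.map_sup _ _) rfl).symm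

lemma map_bsle_map {φ : β → β} (hφ : ∀ x y, L.lt x y → L.lt (φ x) (φ y)) (hab : bsle L a b) :
    bsle L (WithBot.map φ a) (WithBot.map φ b) := by
  rw [bsle_iff_le] at *
  exact (StrictMono.withBot_map fun x y => hφ x y).monotone hab

end WithBotOrder

/-- The linear order `L` is invariant under addition. This is a predicate on a term `L` because
`Fin n →₀ ℕ` already carries its componentwise order as an instance. -/
def AddCompatible {M : Type*} [Add M] (L : LinearOrder M) : Prop :=
  ∀ a b c : M, L.lt a b → L.lt (a + c) (b + c)

lemma exists_add_le_of_mem_support {R M : Type*} [Semiring R] [NoZeroDivisors R]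
    [AddCommMagma M] {L : LinearOrder M} (hL : AddCompatible L) {p q : AddMonoidAlgebra R M}
    {a b : M} (ha : a ∈ p.coeff.support) (hb : b ∈ q.coeff.support) :
    ∃ x ∈ (p * q).coeff.support, L.le (a + b) x := by
  have : AddRightStrictMono M := ⟨fun c a b hab => hL a b c hab⟩
  have : AddLeftStrictMono M := ⟨fun c a b hab => by
    simpa only [add_comm c] using hL a b c hab⟩
  have := addLeftMono_of_addLeftStrictMono M
  have := addRightMono_of_addRightStrictMono M
  obtain ⟨a₀, ha₀, hpa₀⟩ := p.coeff.support.exists_max_image id ⟨a, ha⟩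
  obtain ⟨b₀, hb₀, hqb₀⟩ := q.coeff.support.exists_max_image id ⟨b, hb⟩
  have hunique : UniqueAdd p.coeff.support q.coeff.support a₀ b₀ := fun x y hx hy hxy =>
    (add_eq_add_iff_eq_and_eq (hpa₀ x hx) (hqb₀ y hy)).1 hxy
  refine ⟨a₀ + b₀, ?_, add_le_add (hpa₀ a ha) (hqb₀ b hb)⟩
  rw [Finsupp.mem_support_iff, AddMonoidAlgebra.coeff_mul_add_of_uniqueAdd hunique]
  exact mul_ne_zero (Finsupp.mem_support_iff.1 ha₀) (Finsupp.mem_support_iff.1 hb₀)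

/-- The order `L2` on module monomials is invariant under multiplication by monomials. -/
def ModuleCompatible {m n : ℕ} (L2 : LinearOrder (Fin m × (Fin n →₀ ℕ))) : Prop :=
  ∀ (p q : Fin m × (Fin n →₀ ℕ)) (γ : Fin n →₀ ℕ), L2.lt p q → L2.lt (p.1, p.2 + γ) (q.1, q.2 + γ)

section LeadingMonomials

variable {k : Type*} [Field k] {m n : ℕ} {L1 : LinearOrder (Fin n →₀ ℕ)}
  {L2 : LinearOrder (Fin m × (Fin n →₀ ℕ))} {f g p : MvPolynomial (Fin n) k}
  {u v : Fin m → MvPolynomial (Fin n) k} {t γ : Fin n →₀ ℕ}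

lemma ModuleCompatible.addCompatible_lift (h2 : ModuleCompatible L2) (i : Fin m) :
    AddCompatible (@LinearOrder.lift' _ _ L2 (fun α => (i, α)) (Prod.mk_right_injective i)) :=
  fun α β γ => h2 (i, α) (i, β) γ

lemma mem_msupport {x : Fin m × (Fin n →₀ ℕ)} : x ∈ msupport u ↔ x.2 ∈ (u x.1).support := by
  obtain ⟨i, α⟩ := x
  simp [msupport]

lemma support_monomial_mul {R σ : Type*} [CommSemiring R] (t : σ →₀ ℕ) (f : MvPolynomial σ R) :
    (monomial t (1 : R) * f).support = f.support.map (addLeftEmbedding t) :=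
  AddMonoidAlgebra.support_coeff_single_mul f 1 (by simp) t

lemma msupport_tsmul (t : Fin n →₀ ℕ) (u : Fin m → MvPolynomial (Fin n) k) :
    msupport (tsmul t u) =
      (msupport u).map ((Function.Embedding.refl _).prodMap (addLeftEmbedding t)) := by
  ext ⟨i, α⟩
  simp only [mem_msupport, tsmul, support_monomial_mul]
  simp [mem_msupport]

lemma lpp_monomial_mul (h1 : AddCompatible L1) (t : Fin n →₀ ℕ) (f : MvPolynomial (Fin n) k) :
    lpp L1 (monomial t 1 * f) = WithBot.map (fun β => t + β) (lpp L1 f) := by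
  rw [lpp, support_monomial_mul]
  exact max_map_of_strictMono fun a b hab => by simpa [add_comm t] using h1 a b t hab

lemma sig_tsmul (h2 : ModuleCompatible L2) (t : Fin n →₀ ℕ)
    (u : Fin m → MvPolynomial (Fin n) k) :
    sig L2 (tsmul t u) = WithBot.map (Prod.map id (t + ·)) (sig L2 u) := by
  rw [sig, msupport_tsmul]
  exact max_map_of_strictMono fun x y hxy => by
    simpa [Prod.map, add_comm t] using h2 x y t hxy

lemma lpp_monomial_mul_mono (h1 : AddCompatible L1) (t : Fin n →₀ ℕ)
    (hfg : bsle L1 (lpp L1 f) (lpp L1 g)) :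
    bsle L1 (lpp L1 (monomial t 1 * f)) (lpp L1 (monomial t 1 * g)) := by
  simp only [lpp_monomial_mul h1]
  exact map_bsle_map (fun a b hab => by simpa only [add_comm t] using h1 a b t hab) hfg

lemma sig_tsmul_mono (h2 : ModuleCompatible L2) (t : Fin n →₀ ℕ)
    (huv : bsle L2 (sig L2 u) (sig L2 v)) :
    bsle L2 (sig L2 (tsmul t u)) (sig L2 (tsmul t v)) := by
  simp only [sig_tsmul h2]
  exact map_bsle_map (fun x y hxy => by simpa [Prod.map, add_comm t] using h2 x y t hxy) huv

lemma lpp_monomial_mul_bsle (h1 : AddCompatible L1) (ht : t ∈ p.support) :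
    bsle L1 (lpp L1 (monomial t 1 * g)) (lpp L1 (p * g)) := by
  simp only [lpp, support_monomial_mul, max_bsle_iff, coe_bsle_max_iff, Finset.forall_mem_map]
  exact fun α hα => exists_add_le_of_mem_support h1 ht hα

lemma sig_tsmul_bsle (h2 : ModuleCompatible L2) (ht : t ∈ p.support) :
    bsle L2 (sig L2 (tsmul t v)) (sig L2 (p • v)) := by
  simp only [sig, msupport_tsmul, max_bsle_iff, coe_bsle_max_iff, Finset.forall_mem_map]
  rintro ⟨i, α⟩ hα
  obtain ⟨x, hx, hle⟩ :=
    exists_add_le_of_mem_support (h2.addCompatible_lift i) ht (mem_msupport.1 hα)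
  exact ⟨(i, x), mem_msupport.2 hx, hle⟩

lemma lpp_add_bsle {b : WithBot (Fin n →₀ ℕ)} (hf : bsle L1 (lpp L1 f) b)
    (hg : bsle L1 (lpp L1 g) b) : bsle L1 (lpp L1 (f + g)) b := by
  simp only [lpp, max_bsle_iff] at *
  exact fun α hα => (Finset.mem_union.1 (support_add hα)).elim (hf α) (hg α)

lemma lpp_smul_bsle (c : k) (f : MvPolynomial (Fin n) k) :
    bsle L1 (lpp L1 (c • f)) (lpp L1 f) := by
  simp only [lpp, max_bsle_iff, coe_bsle_max_iff]
  exact fun α hα => ⟨α, support_smul hα, L1.le_refl α⟩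

lemma sig_sub_smul_bsle {s : WithBot (Fin m × (Fin n →₀ ℕ))} (hu : bsle L2 (sig L2 u) s)
    (hv : bsle L2 (sig L2 v) s) (c : k) : bsle L2 (sig L2 (u - c • v)) s := by
  simp only [sig, max_bsle_iff, mem_msupport] at *
  intro x hx
  rcases Finset.mem_union.1 (support_sub _ _ _ hx) with h | h
  · exact hu x h
  · exact hv x (support_smul h)

lemma lpp_eq_bot_iff : lpp L1 f = ⊥ ↔ f = 0 := by
  rw [lpp, Finset.max_eq_bot, support_eq_empty]

lemma exists_lpp_eq (hf : f ≠ 0) : ∃ γ : Fin n →₀ ℕ, lpp L1 f = γ := by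
  obtain ⟨γ, hγ⟩ := WithBot.ne_bot_iff_exists.1 (mt lpp_eq_bot_iff.1 hf)
  exact ⟨γ, hγ.symm⟩

lemma mem_support_of_lpp_eq (hγ : lpp L1 f = γ) : γ ∈ f.support :=
  Finset.mem_of_max hγ

lemma plc_eq_coeff (hγ : lpp L1 f = γ) : plc L1 f = coeff γ f := by
  rw [plc, hγ, WithBot.recBotCoe_coe]

lemma plc_ne_zero (hf : f ≠ 0) : plc L1 f ≠ 0 := by
  obtain ⟨γ, hγ⟩ := exists_lpp_eq (L1 := L1) hf
  rw [plc_eq_coeff hγ]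
  exact mem_support_iff.1 (mem_support_of_lpp_eq hγ)

lemma plc_monomial_mul (h1 : AddCompatible L1) (t : Fin n →₀ ℕ) (f : MvPolynomial (Fin n) k) :
    plc L1 (monomial t 1 * f) = plc L1 f := by
  rw [plc, plc, lpp_monomial_mul h1]
  cases lpp L1 f with
  | bot => rfl
  | coe γ => simp [-WithBot.coe_add, coeff_monomial_mul]

lemma lpp_sub_smul_bslt (hf : f ≠ 0) (hfg : lpp L1 f = lpp L1 g) :
    bslt L1 (lpp L1 (f - (plc L1 f / plc L1 g) • g)) (lpp L1 f) := by
  obtain ⟨γ, hγ⟩ := exists_lpp_eq (L1 := L1) hf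
  have hγg : lpp L1 g = γ := hfg ▸ hγ
  have hg : coeff γ g ≠ 0 := mem_support_iff.1 (mem_support_of_lpp_eq hγg)
  rw [plc_eq_coeff hγ, plc_eq_coeff hγg, hγ, lpp, max_bslt_coe_iff]
  intro α hα
  have hle : L1.le α γ := by
    rcases Finset.mem_union.1 (support_sub _ _ _ hα) with h | h
    · exact Finset.le_max_of_eq h hγ
    · exact Finset.le_max_of_eq (support_smul h) hγg
  have hne : α ≠ γ := by
    rintro rfl
    simp [hg] at hα
  exact @lt_of_le_of_ne _ L1.toPartialOrder _ _ hle hne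

end LeadingMonomials

lemma mlcm_comm {n : ℕ} (γ δ : Fin n →₀ ℕ) : mlcm γ δ = mlcm δ γ := by
  ext i
  simp [mlcm, max_comm]

lemma exists_eq_add_mlcm_sub {n : ℕ} {γ δ t t' : Fin n →₀ ℕ} (h : t + γ = t' + δ) :
    ∃ e, t = e + (mlcm γ δ - γ) ∧ t' = e + (mlcm γ δ - δ) := by
  refine ⟨t + γ - mlcm γ δ, ?_, ?_⟩ <;> ext i <;>
    have hi := DFunLike.congr_fun h i <;>
    simp only [Finsupp.add_apply, Finsupp.tsub_apply, mlcm, Finsupp.zipWith_apply] at hi ⊢ <;>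
    omega

/-- A pair `(g, v)`, for the labeled polynomial `g^[v]`; that `g = v · f⃗` is not built in. -/
abbrev LabeledPoly (k : Type*) [Field k] (m n : ℕ) : Type _ :=
  MvPolynomial (Fin n) k × (Fin m → MvPolynomial (Fin n) k)

/-- The polynomials `x^t g` with `g^[v] ∈ G` whose label satisfies `s(x^t v) ⪯ s`. -/
def boundedMultiples {k : Type*} [Field k] {m n : ℕ} (L2 : LinearOrder (Fin m × (Fin n →₀ ℕ)))
    (G : Set (LabeledPoly k m n)) (s : WithBot (Fin m × (Fin n →₀ ℕ))) :
    Set (MvPolynomial (Fin n) k) :=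
  {h | ∃ gv ∈ G, ∃ t, bsle L2 (sig L2 (tsmul t gv.2)) s ∧ monomial t 1 * gv.1 = h}

/-- The S-polynomial of every critical pair of elements of `G` has a standard representation
w.r.t. `G`. The last premise orients the pair: the multiple of `gv` has the larger signature. -/
def SpolysHaveStdRep {k : Type*} [Field k] {m n : ℕ} (L1 : LinearOrder (Fin n →₀ ℕ))
    (L2 : LinearOrder (Fin m × (Fin n →₀ ℕ))) (G : Set (LabeledPoly k m n)) : Prop :=
  ∀ gv ∈ G, ∀ hw ∈ G, gv.1 ≠ 0 → hw.1 ≠ 0 → ∀ γ δ : Fin n →₀ ℕ,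
    lpp L1 gv.1 = γ → lpp L1 hw.1 = δ →
    bsle L2 (sig L2 (tsmul (mlcm γ δ - δ) hw.2)) (sig L2 (tsmul (mlcm γ δ - γ) gv.2)) →
    HasStdRep L1 L2 G (spolyP L1 gv hw (mlcm γ δ - γ) (mlcm γ δ - δ))
      (spolyV L1 gv hw (mlcm γ δ - γ) (mlcm γ δ - δ))

section BoundedMultiples

variable {k : Type*} [Field k] {m n : ℕ} {L1 : LinearOrder (Fin n →₀ ℕ)}
  {L2 : LinearOrder (Fin m × (Fin n →₀ ℕ))} {G : Set (LabeledPoly k m n)}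
  {gv hw : LabeledPoly k m n} {f : MvPolynomial (Fin n) k}
  {u : Fin m → MvPolynomial (Fin n) k} {s s' : WithBot (Fin m × (Fin n →₀ ℕ))}

lemma boundedMultiples_mono (hs : bsle L2 s s') :
    boundedMultiples L2 G s ⊆ boundedMultiples L2 G s' := by
  rintro _ ⟨gv, hgv, t, ht, rfl⟩
  exact ⟨gv, hgv, t, bsle_trans ht hs, rfl⟩

lemma mul_mem_span_boundedMultiples (h1 : AddCompatible L1) (h2 : ModuleCompatible L2)
    (hgv : gv ∈ G) (p : MvPolynomial (Fin n) k) :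
    p * gv.1 ∈ Submodule.span k
      {h ∈ boundedMultiples L2 G (sig L2 (p • gv.2)) | bsle L1 (lpp L1 h) (lpp L1 (p * gv.1))} := by
  have hp : p * gv.1 = ∑ t ∈ p.support, coeff t p • (monomial t 1 * gv.1) := by
    conv_lhs => rw [p.as_sum, Finset.sum_mul]
    simp [← smul_mul_assoc, smul_monomial]
  rw [hp]
  refine Submodule.sum_smul_mem _ _ fun t ht => Submodule.subset_span ?_
  rw [← hp]
  exact ⟨⟨gv, hgv, t, sig_tsmul_bsle h2 ht, rfl⟩, lpp_monomial_mul_bsle h1 ht⟩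

lemma dotf_mem_span_boundedMultiples (h1 : AddCompatible L1) (h2 : ModuleCompatible L2)
    {fvec : Fin m → MvPolynomial (Fin n) k}
    (hGe : ∀ i, (fvec i, Pi.single i (1 : MvPolynomial (Fin n) k)) ∈ G)
    (u : Fin m → MvPolynomial (Fin n) k) :
    dotf fvec u ∈ Submodule.span k (boundedMultiples L2 G (sig L2 u)) := by
  refine sum_mem fun i _ => Submodule.span_mono ?_
    (mul_mem_span_boundedMultiples h1 h2 (hGe i) (u i))
  refine (Set.sep_subset _ _).trans (boundedMultiples_mono ?_)
  simp only [sig, max_bsle_iff, coe_bsle_max_iff, mem_msupport]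
  rintro ⟨j, α⟩ hα
  refine ⟨(j, α), ?_, L2.le_refl _⟩
  obtain rfl | hji := eq_or_ne j i
  · simpa using hα
  · simp [hji] at hα

lemma HasStdRep.monomial_mul (h1 : AddCompatible L1) (h2 : ModuleCompatible L2)
    (hf : HasStdRep L1 L2 G f u) (e : Fin n →₀ ℕ) :
    HasStdRep L1 L2 G (monomial e 1 * f) (tsmul e u) := by
  obtain ⟨N, p, g, hg, hsum, hlpp, hsig⟩ := hf
  refine ⟨N, fun i => monomial e 1 * p i, g, hg, ?_, fun i => ?_, fun i => ?_⟩
  · simp only [hsum, Finset.mul_sum, mul_assoc]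
  · simpa only [mul_assoc] using lpp_monomial_mul_mono h1 e (hlpp i)
  · simp only [mul_assoc]
    exact sig_tsmul_mono h2 e (hsig i)

lemma HasStdRep.mem_span_boundedMultiples (h1 : AddCompatible L1) (h2 : ModuleCompatible L2)
    (hf : HasStdRep L1 L2 G f u) :
    f ∈ Submodule.span k
      {h ∈ boundedMultiples L2 G (sig L2 u) | bsle L1 (lpp L1 h) (lpp L1 f)} := by
  obtain ⟨N, p, g, hg, hsum, hlpp, hsig⟩ := hf
  have hmem (i : Fin N) : p i * (g i).1 ∈ Submodule.span k
      {h ∈ boundedMultiples L2 G (sig L2 u) | bsle L1 (lpp L1 h) (lpp L1 f)} :=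
    Submodule.span_mono
      (fun _ hh => And.intro (boundedMultiples_mono (hsig i) hh.1) (bsle_trans hh.2 (hlpp i)))
      (mul_mem_span_boundedMultiples h1 h2 (hg i) (p i))
  have := sum_mem fun i (_ : i ∈ Finset.univ) => hmem i
  rwa [← hsum] at this

lemma monomial_add_eq_mul {R σ : Type*} [CommSemiring R] (s t : σ →₀ ℕ) :
    monomial (s + t) (1 : R) = monomial s 1 * monomial t 1 := by
  rw [monomial_mul, mul_one]

lemma monomial_mul_spolyP (gv hw : LabeledPoly k m n) (tg th e : Fin n →₀ ℕ) :
    monomial e 1 * spolyP L1 gv hw tg th = monomial (e + tg) 1 * gv.1 -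
      (plc L1 gv.1 / plc L1 hw.1) • (monomial (e + th) 1 * hw.1) := by
  rw [spolyP, monomial_add_eq_mul, monomial_add_eq_mul, smul_eq_C_mul]
  ring

lemma tsmul_spolyV (gv hw : LabeledPoly k m n) (tg th e : Fin n →₀ ℕ) :
    tsmul e (spolyV L1 gv hw tg th) = tsmul (e + tg) gv.2 -
      (plc L1 gv.1 / plc L1 hw.1) • tsmul (e + th) hw.2 := by
  ext1 j
  simp only [spolyV, tsmul, Pi.sub_apply, Pi.smul_apply, monomial_add_eq_mul,
    smul_eq_C_mul]
  ring

lemma sub_smul_mem_span_boundedMultiples (h1 : AddCompatible L1) (h2 : ModuleCompatible L2)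
    {tg th e : Fin n →₀ ℕ} (hrep : HasStdRep L1 L2 G (spolyP L1 gv hw tg th)
      (spolyV L1 gv hw tg th)) (hg0 : gv.1 ≠ 0)
    (hlpp : lpp L1 (monomial (e + tg) 1 * gv.1) = lpp L1 (monomial (e + th) 1 * hw.1))
    (hsg : bsle L2 (sig L2 (tsmul (e + tg) gv.2)) s)
    (hsh : bsle L2 (sig L2 (tsmul (e + th) hw.2)) s) :
    monomial (e + tg) 1 * gv.1 -
        (plc L1 gv.1 / plc L1 hw.1) • (monomial (e + th) 1 * hw.1) ∈
      Submodule.span k {h ∈ boundedMultiples L2 G s |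
        bslt L1 (lpp L1 h) (lpp L1 (monomial (e + tg) 1 * gv.1))} := by
  have hsig : bsle L2 (sig L2 (tsmul e (spolyV L1 gv hw tg th))) s := by
    rw [tsmul_spolyV]
    exact sig_sub_smul_bsle hsg hsh _
  have hlt : bslt L1 (lpp L1 (monomial e 1 * spolyP L1 gv hw tg th))
      (lpp L1 (monomial (e + tg) 1 * gv.1)) := by
    have := lpp_sub_smul_bslt (mul_ne_zero (by simp) hg0) hlpp
    rwa [plc_monomial_mul h1, plc_monomial_mul h1, ← monomial_mul_spolyP] at this
  rw [← monomial_mul_spolyP]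
  exact Submodule.span_mono
    (fun _ hh => And.intro (boundedMultiples_mono hsig hh.1) (bslt_of_bsle_of_bslt hh.2 hlt))
    ((hrep.monomial_mul h1 h2 e).mem_span_boundedMultiples h1 h2)

theorem SpolysHaveStdRep.exists_sub_smul_mem_span (h1 : AddCompatible L1)
    (h2 : ModuleCompatible L2) (hG : SpolysHaveStdRep L1 L2 G) {x y : MvPolynomial (Fin n) k}
    (hx : x ∈ boundedMultiples L2 G s) (hy : y ∈ boundedMultiples L2 G s)
    (hxy : lpp L1 x = lpp L1 y) :
    ∃ c : k, x - c • y ∈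
      Submodule.span k {h ∈ boundedMultiples L2 G s | bslt L1 (lpp L1 h) (lpp L1 x)} := by
  obtain rfl | hx0 := eq_or_ne x 0
  · exact ⟨0, by simp⟩
  have hy0 : y ≠ 0 := by rwa [Ne, ← lpp_eq_bot_iff (L1 := L1), ← hxy, lpp_eq_bot_iff]
  obtain ⟨gv, hgv, t, hsg, rfl⟩ := hx
  obtain ⟨hw, hhw, t', hsh, rfl⟩ := hy
  have hg0 : gv.1 ≠ 0 := right_ne_zero_of_mul hx0
  have hh0 : hw.1 ≠ 0 := right_ne_zero_of_mul hy0
  obtain ⟨γ, hγ⟩ := exists_lpp_eq (L1 := L1) hg0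
  obtain ⟨δ, hδ⟩ := exists_lpp_eq (L1 := L1) hh0
  have htt' : t + γ = t' + δ := by
    rw [lpp_monomial_mul h1, lpp_monomial_mul h1, hγ, hδ] at hxy
    exact WithBot.coe_injective hxy
  obtain ⟨e, rfl, rfl⟩ := exists_eq_add_mlcm_sub htt'
  rcases bsle_total (L := L2) (sig L2 (tsmul (mlcm γ δ - δ) hw.2))
    (sig L2 (tsmul (mlcm γ δ - γ) gv.2)) with h | h
  · exact ⟨_, sub_smul_mem_span_boundedMultiples h1 h2 (hG gv hgv hw hhw hg0 hh0 γ δ hγ hδ h) hg0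
      hxy hsg hsh⟩
  · rw [mlcm_comm γ δ] at *
    rw [hxy]
    exact ⟨_, sub_inv_smul_mem (div_ne_zero (plc_ne_zero hh0) (plc_ne_zero hg0))
      (sub_smul_mem_span_boundedMultiples h1 h2 (hG hw hhw gv hgv hh0 hg0 δ γ hδ hγ h) hh0
        hxy.symm hsh hsg)⟩

theorem SpolysHaveStdRep.exists_lpp_eq_of_mem_span (h1 : AddCompatible L1)
    (h1wf : WellFounded L1.lt) (h2 : ModuleCompatible L2) (hG : SpolysHaveStdRep L1 L2 G)
    (hf : f ∈ Submodule.span k (boundedMultiples L2 G s)) (hf0 : f ≠ 0) :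
    ∃ h ∈ boundedMultiples L2 G s, lpp L1 h = lpp L1 f := by
  let := @WithBot.linearOrder _ L1
  have : @WellFoundedLT _ L1.toLT := ⟨h1wf⟩
  have : WellFoundedLT (WithBot (Fin n →₀ ℕ)) := WithBot.instWellFoundedLT
  refine exists_deg_eq_of_mem_span (deg := lpp L1) (fun p q => ?_) (fun c p => ?_)
    (fun x hx y hy hxy => ?_) hf hf0
  · exact bsle_iff_le.1 (lpp_add_bsle (bsle_iff_le.2 (le_max_left _ _))
      (bsle_iff_le.2 (le_max_right _ _)))
  · exact bsle_iff_le.1 (lpp_smul_bsle c p)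
  · simpa only [bslt_iff_lt] using hG.exists_sub_smul_mem_span h1 h2 hx hy hxy

end BoundedMultiples

theorem labeledGB_from_spolys_general {k : Type*} [Field k] {n m : ℕ}
    {L1 : LinearOrder (Fin n →₀ ℕ)} {L2 : LinearOrder (Fin m × (Fin n →₀ ℕ))}
    (h1 : AddCompatible L1) (h1wf : WellFounded L1.lt) (h2 : ModuleCompatible L2)
    (fvec : Fin m → MvPolynomial (Fin n) k) (G : Set (LabeledPoly k m n))
    (_hGlabeled : ∀ gv ∈ G, gv.1 = dotf fvec gv.2)
    (hGe : ∀ i, (fvec i, Pi.single i (1 : MvPolynomial (Fin n) k)) ∈ G)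
    (hG : SpolysHaveStdRep L1 L2 G) : IsLabeledGB L1 L2 fvec G := by
  intro f u hfu hf0
  have hmem : f ∈ Submodule.span k (boundedMultiples L2 G (sig L2 u)) :=
    hfu ▸ dotf_mem_span_boundedMultiples h1 h2 hGe u
  obtain ⟨_, ⟨gv, hgv, t, hsig, rfl⟩, hlpp⟩ := hG.exists_lpp_eq_of_mem_span h1 h1wf h2 hmem hf0
  have hg0 : gv.1 ≠ 0 := by
    contrapose! hf0
    rwa [hf0, mul_zero, lpp_eq_bot_iff.2 rfl, eq_comm, lpp_eq_bot_iff] at hlpp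
  exact ⟨gv, hgv, hg0, t, by rw [← lpp_monomial_mul h1, hlpp], hsig⟩

/-- If for every critical pair of two elements of `G` the corresponding S-polynomial has
a standard representation w.r.t. `G`, then `G` is a labeled Gröbner basis of
`(f₁, …, f_m)`.  (Here `G` is a finite set of labeled polynomials containing every
`fᵢ^[eᵢ]`.) -/
theorem labeledGB_from_spolys (k : Type*) [Field k] (n m : ℕ)
    (L1 : LinearOrder (Fin n →₀ ℕ)) (L2 : LinearOrder (Fin m × (Fin n →₀ ℕ)))
    (h1add : ∀ a b c : Fin n →₀ ℕ, L1.lt a b → L1.lt (a + c) (b + c))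
    (h1wf : WellFounded L1.lt)
    (h2add : ∀ (p q : Fin m × (Fin n →₀ ℕ)) (γ : Fin n →₀ ℕ),
      L2.lt p q → L2.lt (p.1, p.2 + γ) (q.1, q.2 + γ))
    (h21 : ∀ (i : Fin m) (α β : Fin n →₀ ℕ), L1.lt α β → L2.lt (i, α) (i, β))
    (fvec : Fin m → MvPolynomial (Fin n) k)
    (G : Finset (MvPolynomial (Fin n) k × (Fin m → MvPolynomial (Fin n) k)))
    (hGlabeled : ∀ p ∈ G, p.1 = dotf fvec p.2)
    (hGe : ∀ i : Fin m,
      (fvec i, (Pi.single i (1 : MvPolynomial (Fin n) k) :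
        Fin m → MvPolynomial (Fin n) k)) ∈ G)
    (hcrit : ∀ gv ∈ G, ∀ hw ∈ G, gv.1 ≠ 0 → hw.1 ≠ 0 →
      ∀ γ δ : Fin n →₀ ℕ,
        lpp L1 gv.1 = (γ : WithBot (Fin n →₀ ℕ)) →
        lpp L1 hw.1 = (δ : WithBot (Fin n →₀ ℕ)) →
        -- orientation: `(x^{t_g}, gv, x^{t_h}, hw)` is the critical pair
        bsle L2 (sig L2 (tsmul (mlcm γ δ - δ) hw.2)) (sig L2 (tsmul (mlcm γ δ - γ) gv.2)) →
        HasStdRep L1 L2 (↑G) (spolyP L1 gv hw (mlcm γ δ - γ) (mlcm γ δ - δ))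
          (spolyV L1 gv hw (mlcm γ δ - γ) (mlcm γ δ - δ))) :
    IsLabeledGB L1 L2 fvec (↑G) :=
  labeledGB_from_spolys_general h1add h1wf h2add fvec ↑G hGlabeled hGe hcrit
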